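/- Let L = ⊕_{i ≥ −1} L_i be a graded subalgebra of Vect_pol(E). Then N(L_{−1}) = ⊕_{i ≥ −1} n_i(L_{−1}) is an infinite-dimensional graded Lie subalgebra of Vect_pol(E) containing L. Moreover, N(L_{−1}) = Vect_pol(E) if and only if L_{−1} = Vect_{−1}(E). -/

import Mathlib

/-! Write `F = L₋₁`, a space of constant vector fields. The spaces `n_i(F)` admit a recursive
description: `n₋₁(F) = F`, and a field `Y` of weight `i + 1` lies in `n_{i+1}(F)` exactly when
`⁅h, Y⁆ ∈ n_i(F)` for all `h ∈ F` (`mem_nF_neg_one`, `lie_mem_nF`, `mem_nF_of_lie`). With this,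
closure under the bracket (`lie_nF_nF`) is an induction on the total degree using the Jacobi
identity, and `L_i ≤ n_i(F)`, as well as `Vect_i ≤ n_i(F)` when `F = Vect₋₁`, are inductions on `i`
(`le_nF_of_lie`).

The weight spaces of the Euler field are independent (eigenspaces, characteristic zero) and those
of weight at least `-1` span, since a monomial times `∂_i` is a weight vector (`iSup_VectP`). Hence
there is nothing in weight `-2`, constant fields commute, and the weight `-1` part of `N(F)` is `F`,
so `N(F)` is everything only if `F = Vect₋₁`.

For infinite dimension, every `n_k(F)` with `k ≥ 0` is nonzero (`exists_ne_zero_mem_nF`): it contains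
`x_0 ^ (k + 1) v` for any nonzero `v ∈ F`, while it is the whole of `Vect_k` if `F = 0`. -/

open MvPolynomial

/-- The Lie algebra of polynomial vector fields on `E = 𝕜^n`, realized as the
derivations of the polynomial algebra `𝕜[x_1, …, x_n]`. -/
abbrev Vect (𝕜 : Type*) [Field 𝕜] (n : ℕ) : Type _ :=
  Derivation 𝕜 (MvPolynomial (Fin n) 𝕜) (MvPolynomial (Fin n) 𝕜)

variable (𝕜 : Type*) [Field 𝕜] (n : ℕ)

/-- The Euler vector field `ℰ = Σ x^j ∂_j`. -/
noncomputable def euler : Vect 𝕜 n :=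
  MvPolynomial.mkDerivation 𝕜 fun i => MvPolynomial.X i

/-- `Vect_p(E)`: the eigenspace of `ad(ℰ)` for the eigenvalue `p`, i.e. the vector fields
with homogeneous coefficients of degree `p+1`. -/
noncomputable def VectP (p : ℤ) : Submodule 𝕜 (Vect 𝕜 n) :=
  Module.End.eigenspace (LieAlgebra.ad 𝕜 (Vect 𝕜 n) (euler 𝕜 n)) ((p : 𝕜))

/-- A Lie subalgebra `L` of `Vect_pol(E)` is graded if `L = ⊕_{p ≥ -1} (L ∩ Vect_p(E))`. -/
def IsGradedSubalg (L : LieSubalgebra 𝕜 (Vect 𝕜 n)) : Prop :=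
  L.toSubmodule = ⨆ p ≥ (-1 : ℤ), (L.toSubmodule ⊓ VectP 𝕜 n p)

/-- A Lie subalgebra `L` of `Vect_pol(E)` is maximal if the only subalgebras containing it
are `L` itself and `Vect_pol(E)`. -/
def IsMaxSubalg (L : LieSubalgebra 𝕜 (Vect 𝕜 n)) : Prop :=
  ∀ L' : LieSubalgebra 𝕜 (Vect 𝕜 n), L ≤ L' → L' = L ∨ L' = ⊤

/-- The iterated adjoint action along a list: `iterAd [h₁, …, h_m] X = ⁅h₁, ⁅h₂, …, ⁅h_m, X⁆…⁆⁆`. -/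
noncomputable def iterAd (l : List (Vect 𝕜 n)) : Module.End 𝕜 (Vect 𝕜 n) :=
  (l.map fun h => LieAlgebra.ad 𝕜 (Vect 𝕜 n) h).prod

/-- `n_i(F) = {X ∈ Vect_i(E) : ad(F)^{i+1} X ⊆ F}`: all iterated brackets of `X` with `i+1`
elements of `F` lie in `F`. -/
noncomputable def nF (F : Submodule 𝕜 (Vect 𝕜 n)) (i : ℤ) : Submodule 𝕜 (Vect 𝕜 n) where
  carrier := {X | X ∈ VectP 𝕜 n i ∧
    ∀ l : List (Vect 𝕜 n), (∀ h ∈ l, h ∈ F) → l.length = (i + 1).toNat →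
      iterAd 𝕜 n l X ∈ F}
  add_mem' := by
    rintro a b ⟨ha1, ha2⟩ ⟨hb1, hb2⟩
    refine ⟨add_mem ha1 hb1, fun l hl hlen => ?_⟩
    rw [map_add]
    exact add_mem (ha2 l hl hlen) (hb2 l hl hlen)
  zero_mem' := ⟨zero_mem _, fun l hl hlen => by rw [map_zero]; exact zero_mem F⟩
  smul_mem' := by
    rintro c a ⟨ha1, ha2⟩
    refine ⟨Submodule.smul_mem _ c ha1, fun l hl hlen => ?_⟩
    rw [map_smul]
    exact Submodule.smul_mem F c (ha2 l hl hlen)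

section Helpers

variable {𝕜 n}

/-! ### Weights of the Euler field -/

lemma mem_VectP {p : ℤ} {X : Vect 𝕜 n} : X ∈ VectP 𝕜 n p ↔ ⁅euler 𝕜 n, X⁆ = (p : 𝕜) • X := by
  rw [VectP, Module.End.mem_eigenspace_iff, LieAlgebra.ad_apply]

/-- The Jacobi identity, proved directly: the generic `leibniz_lie` does not find the required
instance on derivations. -/
lemma jacobi_field (X Y Z : Vect 𝕜 n) : ⁅X, ⁅Y, Z⁆⁆ = ⁅⁅X, Y⁆, Z⁆ + ⁅Y, ⁅X, Z⁆⁆ := by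
  refine MvPolynomial.derivation_ext fun i => ?_
  simp only [Derivation.commutator_apply, Derivation.add_apply, map_sub]
  ring

lemma lie_mem_VectP {p q : ℤ} {X Y : Vect 𝕜 n} (hX : X ∈ VectP 𝕜 n p) (hY : Y ∈ VectP 𝕜 n q) :
    ⁅X, Y⁆ ∈ VectP 𝕜 n (p + q) := by
  rw [mem_VectP] at *
  rw [jacobi_field, hX, hY]
  refine MvPolynomial.derivation_ext fun i => ?_
  simp only [Derivation.commutator_apply, Derivation.add_apply, Derivation.smul_apply,
    Derivation.map_smul, Int.cast_add, add_smul, smul_sub]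

lemma lie_smul_field (X v : Vect 𝕜 n) (f : MvPolynomial (Fin n) 𝕜) :
    ⁅X, f • v⁆ = X f • v + f • ⁅X, v⁆ := by
  refine MvPolynomial.derivation_ext fun i => ?_
  simp only [Derivation.commutator_apply, Derivation.add_apply, Derivation.smul_apply,
    Derivation.leibniz, smul_eq_mul]
  ring

lemma euler_monomial (m : Fin n →₀ ℕ) (c : 𝕜) :
    euler 𝕜 n (monomial m c) = (m.degree : 𝕜) • monomial m c := by
  rw [euler, mkDerivation_monomial, Finsupp.sum, Finsupp.degree_apply, Nat.cast_sum,
    Finset.sum_smul, Finset.smul_sum]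
  refine Finset.sum_congr rfl fun i hi => ?_
  have hi' : Finsupp.single i 1 ≤ m := by
    rw [Finsupp.single_le_iff]
    exact Nat.one_le_iff_ne_zero.2 (Finsupp.mem_support_iff.1 hi)
  rw [smul_eq_mul, X, monomial_mul, tsub_add_cancel_of_le hi', mul_one, smul_monomial,
    smul_monomial, smul_eq_mul, smul_eq_mul, mul_comm]

lemma smul_mem_VectP {k p : ℤ} {f : MvPolynomial (Fin n) 𝕜} {v : Vect 𝕜 n}
    (hf : euler 𝕜 n f = (k : 𝕜) • f) (hv : v ∈ VectP 𝕜 n p) : f • v ∈ VectP 𝕜 n (k + p) := by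
  rw [mem_VectP] at *
  rw [lie_smul_field, hf, hv, smul_comm f, smul_assoc, ← add_smul, Int.cast_add]

lemma pderiv_mem_VectP (i : Fin n) : pderiv i ∈ VectP 𝕜 n (-1) := by
  rw [mem_VectP]
  refine MvPolynomial.derivation_ext fun j => ?_
  by_cases h : i = j <;> simp [Derivation.commutator_apply, euler, pderiv_X, h, eq_comm]

lemma X_pow_smul_mem_VectP {p : ℤ} {v : Vect 𝕜 n} (hv : v ∈ VectP 𝕜 n p) (j : Fin n) (k : ℕ) :
    (X j ^ k : MvPolynomial (Fin n) 𝕜) • v ∈ VectP 𝕜 n ((k : ℤ) + p) := by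
  refine smul_mem_VectP ?_ hv
  rw [X_pow_eq_monomial, euler_monomial, Finsupp.degree_single, Int.cast_natCast]

lemma iSup_VectP : ⨆ p ≥ (-1 : ℤ), VectP 𝕜 n p = ⊤ := by
  rw [eq_top_iff]
  intro D _
  have hD : D = ∑ i, D (X i) • (pderiv i : Vect 𝕜 n) := by
    refine MvPolynomial.derivation_ext fun j => ?_
    rw [← Derivation.coeFnAddMonoidHom_apply (∑ i, _), map_sum]
    simp [pderiv_X, Pi.single_apply]
  rw [hD]
  refine Submodule.sum_mem _ fun i _ => ?_
  rw [(D (X i)).as_sum, Finset.sum_smul]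
  refine Submodule.sum_mem _ fun m _ => ?_
  refine Submodule.mem_iSup_of_mem ((m.degree : ℤ) + -1) <| Submodule.mem_iSup_of_mem (by omega) <|
    smul_mem_VectP ?_ (pderiv_mem_VectP i)
  rw [euler_monomial, Int.cast_natCast]

lemma iSupIndep_VectP [CharZero 𝕜] : iSupIndep (VectP 𝕜 n) :=
  (Module.End.eigenspaces_iSupIndep _).comp Int.cast_injective

/-- Weight `-2` is independent of the weights at least `-1`, which already span. -/
lemma VectP_neg_two [CharZero 𝕜] : VectP 𝕜 n (-2) = ⊥ := by
  have h := iSupIndep_VectP (𝕜 := 𝕜) (n := n) (-2)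
  have htop : ⨆ p, ⨆ (_ : p ≠ -2), VectP 𝕜 n p = ⊤ :=
    eq_top_iff.2 <| iSup_VectP.ge.trans <|
      iSup₂_le fun p hp => le_iSup₂_of_le p (by omega) le_rfl
  rwa [htop, disjoint_top] at h

lemma eq_C_of_euler_eq_zero [CharZero 𝕜] {f : MvPolynomial (Fin n) 𝕜} (hf : euler 𝕜 n f = 0) :
    ∃ c : 𝕜, f = C c := by
  have key : ∀ m (f : MvPolynomial (Fin n) 𝕜),
      coeff m (euler 𝕜 n f) = (m.degree : 𝕜) * coeff m f := by
    intro m f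
    induction f using MvPolynomial.induction_on' with
    | monomial u a =>
      rw [euler_monomial, coeff_smul, coeff_monomial]
      split_ifs with h <;> simp [h]
    | add p q hp hq => rw [map_add, coeff_add, hp, hq, coeff_add, mul_add]
  refine ⟨coeff 0 f, ?_⟩
  ext m
  have := key m f
  rw [hf, coeff_zero, eq_comm, mul_eq_zero, Nat.cast_eq_zero, Finsupp.degree_eq_zero_iff] at this
  rw [coeff_C]
  split_ifs with h
  · rw [h]
  · exact this.resolve_left (Ne.symm h)

/-- The fields of weight `-1` are the constant ones. -/
lemma apply_X_eq_C [CharZero 𝕜] {h : Vect 𝕜 n} (hh : h ∈ VectP 𝕜 n (-1)) (j : Fin n) :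
    ∃ c : 𝕜, h (X j) = C c := by
  apply eq_C_of_euler_eq_zero
  rw [mem_VectP] at hh
  have := congrArg (fun D : Vect 𝕜 n => D (X j)) hh
  simpa [Derivation.commutator_apply, euler] using this

/-! ### The spaces `n_i(F)` -/

variable {F : Submodule 𝕜 (Vect 𝕜 n)}

lemma nF_le_VectP (i : ℤ) : nF 𝕜 n F i ≤ VectP 𝕜 n i := fun _ h => h.1

lemma mem_nF_neg_one (hF : F ≤ VectP 𝕜 n (-1)) {Y : Vect 𝕜 n} :
    Y ∈ nF 𝕜 n F (-1) ↔ Y ∈ F := by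
  constructor
  · intro h
    simpa [iterAd] using h.2 [] (by simp) (by simp)
  · intro h
    refine ⟨hF h, fun l _ hl => ?_⟩
    obtain rfl : l = [] := List.eq_nil_of_length_eq_zero (by simpa using hl)
    simpa [iterAd] using h

lemma lie_mem_nF (hF : F ≤ VectP 𝕜 n (-1)) {i : ℤ} (hi : -1 ≤ i) {h Y : Vect 𝕜 n} (hh : h ∈ F)
    (hY : Y ∈ nF 𝕜 n F (i + 1)) : ⁅h, Y⁆ ∈ nF 𝕜 n F i := by
  refine ⟨by simpa using lie_mem_VectP (hF hh) hY.1, fun l hl hlen => ?_⟩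
  have := hY.2 (l ++ [h]) (by simpa [or_imp, forall_and] using ⟨hl, hh⟩) (by simp; omega)
  simpa [iterAd] using this

lemma mem_nF_of_lie {i : ℤ} (hi : -1 ≤ i) {Y : Vect 𝕜 n} (hY : Y ∈ VectP 𝕜 n (i + 1))
    (H : ∀ h ∈ F, ⁅h, Y⁆ ∈ nF 𝕜 n F i) : Y ∈ nF 𝕜 n F (i + 1) := by
  refine ⟨hY, fun l hl hlen => ?_⟩
  rcases l.eq_nil_or_concat with rfl | ⟨l', h, rfl⟩
  · simp at hlen; omega
  · simp only [List.concat_eq_append, List.mem_append, List.mem_singleton, List.length_append,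
      List.length_singleton] at hl hlen
    have := (H h (hl h (Or.inr rfl))).2 l' (fun g hg => hl g (Or.inl hg)) (by omega)
    simpa [iterAd] using this

/-- Any family of graded pieces `A i ≤ Vect_i` with `A (-1) ≤ F` that `ad F` lowers
degree by degree is contained in `n_i(F)`. -/
lemma le_nF_of_lie (hF : F ≤ VectP 𝕜 n (-1)) (A : ℤ → Submodule 𝕜 (Vect 𝕜 n))
    (hA : ∀ i, A i ≤ VectP 𝕜 n i) (hbase : A (-1) ≤ F)
    (hstep : ∀ i, -1 ≤ i → ∀ h ∈ F, ∀ Y ∈ A (i + 1), ⁅h, Y⁆ ∈ A i) {i : ℤ} (hi : -1 ≤ i) :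
    A i ≤ nF 𝕜 n F i := by
  induction i, hi using Int.leInduction with
  | base => exact fun Y hY => (mem_nF_neg_one hF).2 (hbase hY)
  | succ i hi ih =>
    exact fun Y hY => mem_nF_of_lie hi (hA _ hY) fun h hh => ih (hstep i hi h hh Y hY)

lemma lie_eq_zero_of_mem_VectP_neg_one [CharZero 𝕜] {Y Z : Vect 𝕜 n} (hY : Y ∈ VectP 𝕜 n (-1))
    (hZ : Z ∈ VectP 𝕜 n (-1)) : ⁅Y, Z⁆ = 0 := by
  have := lie_mem_VectP hY hZ
  norm_num at this
  rwa [VectP_neg_two, Submodule.mem_bot] at this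

/-- The key closure property, by induction on `i + j`: by the Jacobi identity, bracketing `⁅Y, Z⁆`
with `h ∈ F` reduces to brackets of total degree one less. -/
lemma lie_nF_nF [CharZero 𝕜] (hF : F ≤ VectP 𝕜 n (-1)) (m : ℕ) :
    ∀ (i j : ℤ), -1 ≤ i → -1 ≤ j → i + j + 1 = m → ∀ Y Z, Y ∈ nF 𝕜 n F i →
      Z ∈ nF 𝕜 n F j → ⁅Y, Z⁆ ∈ nF 𝕜 n F (i + j) := by
  induction m with
  | zero =>
    intro i j hi hj hij Y Z hY hZ
    obtain ⟨rfl, rfl⟩ | ⟨rfl, rfl⟩ : (i = -1 ∧ j = 0) ∨ (i = 0 ∧ j = -1) := by omega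
    · exact lie_mem_nF hF (by omega) ((mem_nF_neg_one hF).1 hY) (by simpa using hZ)
    · rw [← lie_skew]
      exact neg_mem (lie_mem_nF hF (by omega) ((mem_nF_neg_one hF).1 hZ) (by simpa using hY))
  | succ m ih =>
    intro i j hi hj hij Y Z hY hZ
    push_cast at hij
    rcases hi.eq_or_lt with rfl | hi'
    · exact lie_mem_nF hF (by omega) ((mem_nF_neg_one hF).1 hY) (by simpa using hZ)
    rcases hj.eq_or_lt with rfl | hj'
    · rw [← lie_skew]
      exact neg_mem (lie_mem_nF hF (by omega) ((mem_nF_neg_one hF).1 hZ) (by simpa using hY))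
    obtain ⟨i, rfl⟩ : ∃ a, i = a + 1 := ⟨i - 1, by omega⟩
    obtain ⟨j, rfl⟩ : ∃ a, j = a + 1 := ⟨j - 1, by omega⟩
    rw [show i + 1 + (j + 1) = (i + j + 1) + 1 by ring]
    refine mem_nF_of_lie (by omega) ?_ fun h hh => ?_
    · rw [show i + j + 1 + 1 = (i + 1) + (j + 1) by ring]
      exact lie_mem_VectP hY.1 hZ.1
    · rw [jacobi_field]
      refine add_mem ?_ ?_
      · rw [show i + j + 1 = i + (j + 1) by ring]
        exact ih _ _ (by omega) (by omega) (by omega) _ _ (lie_mem_nF hF (by omega) hh hY) hZ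
      · rw [show i + j + 1 = (i + 1) + j by ring]
        exact ih _ _ (by omega) (by omega) (by omega) _ _ hY (lie_mem_nF hF (by omega) hh hZ)

lemma nF_le_iSup {i : ℤ} (hi : -1 ≤ i) : nF 𝕜 n F i ≤ ⨆ i ≥ (-1 : ℤ), nF 𝕜 n F i :=
  le_iSup₂_of_le i hi le_rfl

lemma lie_mem_iSup_nF [CharZero 𝕜] (hF : F ≤ VectP 𝕜 n (-1)) {i j : ℤ} (hi : -1 ≤ i)
    (hj : -1 ≤ j) {Y Z : Vect 𝕜 n} (hY : Y ∈ nF 𝕜 n F i) (hZ : Z ∈ nF 𝕜 n F j) :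
    ⁅Y, Z⁆ ∈ ⨆ i ≥ (-1 : ℤ), nF 𝕜 n F i := by
  by_cases hij : -1 ≤ i + j
  · exact nF_le_iSup hij (lie_nF_nF hF (i + j + 1).toNat i j hi hj (by omega) Y Z hY hZ)
  · obtain ⟨rfl, rfl⟩ : i = -1 ∧ j = -1 := by omega
    rw [lie_eq_zero_of_mem_VectP_neg_one hY.1 hZ.1]
    exact zero_mem _

/-- The Lie subalgebra `N(F) = ⨁ n_i(F)`, for a subspace `F` of constant vector fields. -/
noncomputable def NF [CharZero 𝕜] (hF : F ≤ VectP 𝕜 n (-1)) : LieSubalgebra 𝕜 (Vect 𝕜 n) where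
  toSubmodule := ⨆ i ≥ (-1 : ℤ), nF 𝕜 n F i
  lie_mem' := by
    intro Y Z hY hZ
    let S : Submodule 𝕜 (Vect 𝕜 n) := ⨆ i ≥ (-1 : ℤ), nF 𝕜 n F i
    have h1 : ∀ i : ℤ, -1 ≤ i → ∀ Y ∈ nF 𝕜 n F i,
        S ≤ S.comap (LieAlgebra.ad 𝕜 (Vect 𝕜 n) Y) := fun i hi Y hY =>
      iSup₂_le fun j hj Z hZ => lie_mem_iSup_nF hF hi hj hY hZ
    have h2 : S ≤ S.comap (LieAlgebra.ad 𝕜 (Vect 𝕜 n) Z) := iSup₂_le fun i hi Y hY => by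
      have h : ⁅Y, Z⁆ ∈ S := h1 i hi Y hY hZ
      rw [Submodule.mem_comap, LieAlgebra.ad_apply, ← lie_skew]
      exact neg_mem h
    have h3 : ⁅Z, Y⁆ ∈ S := h2 hY
    change ⁅Y, Z⁆ ∈ S
    rw [← lie_skew]
    exact neg_mem h3

/-! ### Infinite dimension -/

/-- If `v ∈ F` then `x_j ^ (i + 1) v ∈ n_i(F)`: since elements of `F` commute with `v` and map
`x_j` to a constant, `ad F` only lowers the exponent. -/
lemma X_pow_smul_mem_nF [CharZero 𝕜] (hF : F ≤ VectP 𝕜 n (-1)) {v : Vect 𝕜 n} (hv : v ∈ F)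
    (j : Fin n) (k : ℕ) : (X j ^ k : MvPolynomial (Fin n) 𝕜) • v ∈ nF 𝕜 n F ((k : ℤ) + -1) := by
  induction k with
  | zero => simpa using (mem_nF_neg_one hF).2 hv
  | succ k ih =>
    have hdeg : (X j ^ (k + 1) : MvPolynomial (Fin n) 𝕜) • v
        ∈ VectP 𝕜 n (((k + 1 : ℕ) : ℤ) + -1) := X_pow_smul_mem_VectP (hF hv) j (k + 1)
    rw [show ((k + 1 : ℕ) : ℤ) + -1 = ((k : ℤ) + -1) + 1 by push_cast; ring] at hdeg ⊢
    refine mem_nF_of_lie (by omega) hdeg fun h hh => ?_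
    obtain ⟨c, hc⟩ := apply_X_eq_C (hF hh) j
    have : ⁅h, (X j ^ (k + 1) : MvPolynomial (Fin n) 𝕜) • v⁆
        = (((k + 1 : ℕ) : 𝕜) * c) • ((X j ^ k : MvPolynomial (Fin n) 𝕜) • v) := by
      rw [lie_smul_field, lie_eq_zero_of_mem_VectP_neg_one (hF hh) (hF hv), smul_zero, add_zero,
        Derivation.leibniz_pow, hc]
      refine Derivation.ext fun f => ?_
      simp only [Derivation.smul_apply, smul_eq_mul, nsmul_eq_mul, MvPolynomial.smul_eq_C_mul,
        map_mul, map_natCast, Nat.add_sub_cancel]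
      ring
    rw [this]
    exact Submodule.smul_mem _ _ ih

lemma exists_ne_zero_mem_nF [CharZero 𝕜] (hn : 0 < n) (hF : F ≤ VectP 𝕜 n (-1)) (k : ℕ) :
    ∃ Y ∈ nF 𝕜 n F k, Y ≠ 0 := by
  have hne : ∀ v : Vect 𝕜 n, v ≠ 0 →
      (X ⟨0, hn⟩ ^ (k + 1) : MvPolynomial (Fin n) 𝕜) • v ≠ 0 := by
    intro v hv h0
    refine hv (Derivation.ext fun f => ?_)
    have := congrArg (fun D : Vect 𝕜 n => D f) h0
    simpa using this
  have hk : (k : ℤ) = ((k + 1 : ℕ) : ℤ) + -1 := by push_cast; ring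
  by_cases hbot : F = ⊥
  · -- If `F = 0`, then `n_k(F)` is all of `Vect_k`.
    refine ⟨(X ⟨0, hn⟩ ^ (k + 1) : MvPolynomial (Fin n) 𝕜) • pderiv ⟨0, hn⟩, ?_, hne _ ?_⟩
    · have := X_pow_smul_mem_VectP (pderiv_mem_VectP (𝕜 := 𝕜) (⟨0, hn⟩ : Fin n)) ⟨0, hn⟩ (k + 1)
      rw [show ((k + 1 : ℕ) : ℤ) + -1 = ((k : ℤ) + -1) + 1 by push_cast; ring] at this
      rw [show (k : ℤ) = ((k : ℤ) + -1) + 1 by ring]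
      refine mem_nF_of_lie (by omega) this fun h hh => ?_
      rw [hbot, Submodule.mem_bot] at hh
      have h0 : ⁅h, (X ⟨0, hn⟩ ^ (k + 1) : MvPolynomial (Fin n) 𝕜) •
          (pderiv ⟨0, hn⟩ : Vect 𝕜 n)⁆ = 0 :=
        Derivation.ext fun f => by simp [hh, Derivation.commutator_apply]
      rw [h0]
      exact zero_mem _
    · intro h
      have := congrArg (fun D : Vect 𝕜 n => D (X ⟨0, hn⟩)) h
      simp at this
  · obtain ⟨v, hv, hv0⟩ := F.exists_mem_ne_zero_of_ne_bot hbot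
    exact ⟨_, hk ▸ X_pow_smul_mem_nF hF hv ⟨0, hn⟩ (k + 1), hne v hv0⟩

lemma not_finiteDimensional_NF [CharZero 𝕜] (hn : 0 < n) (hF : F ≤ VectP 𝕜 n (-1)) :
    ¬ FiniteDimensional 𝕜 (NF hF) := by
  intro hfin
  choose Y hY hY0 using exists_ne_zero_mem_nF hn hF
  have hli : LinearIndependent 𝕜 Y :=
    (iSupIndep_VectP.comp (Nat.cast_injective (R := ℤ))).linearIndependent _
      (fun k => (hY k).1) hY0
  have hmem : ∀ k, Y k ∈ (NF hF).toSubmodule := fun k => nF_le_iSup (by omega) (hY k)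
  have hli' : LinearIndependent 𝕜 (fun k => (⟨Y k, hmem k⟩ : (NF hF).toSubmodule)) :=
    LinearIndependent.of_comp (NF hF).toSubmodule.subtype hli
  have : FiniteDimensional 𝕜 (NF hF).toSubmodule := hfin
  have := hli'.finite
  exact not_finite ℕ

end Helpers

/-- Let `L = ⊕_{i ≥ -1} L_i` be a graded subalgebra of `Vect_pol(E)`.  Then
`N(L₋₁) = ⊕_{i ≥ -1} n_i(L₋₁)` is an infinite-dimensional graded Lie subalgebra of
`Vect_pol(E)` containing `L`; moreover `N(L₋₁) = Vect_pol(E)` iff `L₋₁ = Vect₋₁(E)`. -/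
theorem statement5 (𝕜 : Type) [RCLike 𝕜] (n : ℕ) (hn : 0 < n)
    (L : LieSubalgebra 𝕜 (Vect 𝕜 n)) (hgraded : IsGradedSubalg 𝕜 n L) :
    ∃ N : LieSubalgebra 𝕜 (Vect 𝕜 n),
      (N.toSubmodule = ⨆ i ≥ (-1 : ℤ), nF 𝕜 n (L.toSubmodule ⊓ VectP 𝕜 n (-1)) i) ∧
      IsGradedSubalg 𝕜 n N ∧
      ¬ FiniteDimensional 𝕜 N ∧
      L ≤ N ∧
      (N = ⊤ ↔ L.toSubmodule ⊓ VectP 𝕜 n (-1) = VectP 𝕜 n (-1)) := by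
  set F : Submodule 𝕜 (Vect 𝕜 n) := L.toSubmodule ⊓ VectP 𝕜 n (-1) with hFdef
  have hF : F ≤ VectP 𝕜 n (-1) := inf_le_right
  have hLN : L.toSubmodule ≤ (NF hF).toSubmodule := by
    rw [hgraded]
    refine iSup₂_le fun i hi => le_trans ?_ (nF_le_iSup hi)
    refine le_nF_of_lie hF (fun i => L.toSubmodule ⊓ VectP 𝕜 n i) (fun _ => inf_le_right) le_rfl
      (fun i _ h hh Y hY => ⟨L.lie_mem hh.1 hY.1, ?_⟩) hi
    simpa using lie_mem_VectP hh.2 hY.2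
  refine ⟨NF hF, rfl, ?_, not_finiteDimensional_NF hn hF, hLN, ?_, ?_⟩
  · exact le_antisymm
      (iSup₂_le fun i hi => le_iSup₂_of_le i hi (le_inf (nF_le_iSup hi) (nF_le_VectP i)))
      (iSup₂_le fun _ _ => inf_le_left)
  · intro htop
    refine le_antisymm hF fun v hv => ?_
    have hle : (NF hF).toSubmodule ≤ F ⊔ ⨆ p, ⨆ (_ : p ≠ -1), VectP 𝕜 n p := by
      refine iSup₂_le fun i hi => ?_
      by_cases h : i = -1
      · subst h
        exact le_sup_of_le_left fun Y hY => (mem_nF_neg_one hF).1 hY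
      · exact le_sup_of_le_right ((nF_le_VectP i).trans (le_iSup₂_of_le i h le_rfl))
    have hvN : v ∈ (NF hF).toSubmodule := by
      rw [htop]
      exact Submodule.mem_top
    obtain ⟨a, ha, b, hb, rfl⟩ := Submodule.mem_sup.1 (hle hvN)
    -- The component `b` has weight `-1` and lies in the span of the other weights, so it vanishes.
    have hb' : b ∈ VectP 𝕜 n (-1) := by simpa using sub_mem hv (hF ha)
    rw [Submodule.disjoint_def.1 (iSupIndep_VectP (-1)) b hb' hb, add_zero]
    exact ha
  · intro hEq
    rw [← LieSubalgebra.toSubmodule_inj, LieSubalgebra.top_toSubmodule, eq_top_iff, ← iSup_VectP]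
    refine iSup₂_le fun i hi => le_trans ?_ (nF_le_iSup hi)
    refine le_nF_of_lie hF (VectP 𝕜 n) (fun _ => le_rfl) hEq.ge (fun i _ h hh Y hY => ?_) hi
    simpa using lie_mem_VectP (hF hh) hY
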